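/- Let K be a nonempty compact Hausdorff topological space, let n ≥ 1, r ≥ 1, and let φ : K × S^{n-1} → M_r(ℂ) be a continuous map such that φ(x, -ξ) = φ(x, ξ) for all (x, ξ) and such that φ(x, ξ) is an invertible matrix for every (x, ξ). Then for every ε > 0 there exist a natural number s ≥ 1 and continuous maps a_α : K → M_r(ℂ), indexed by the (finitely many) multi-indices α ∈ ℕⁿ with |α| = 2s, such that the map h(x, ξ) = Σ_{|α| = 2s} a_α(x) ξ^α satisfies ‖h(x, ξ) − φ(x, ξ)‖ < ε for all (x, ξ) ∈ K × S^{n-1}, and h(x, ξ) is invertible for every x ∈ K and every ξ ∈ ℝⁿ with ξ ≠ 0. -/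

import Mathlib

attribute [local instance] Matrix.linftyOpNormedRing Matrix.linftyOpNormedAlgebra


abbrev Sph (n : ℕ) := Metric.sphere (0 : EuclideanSpace ℝ (Fin n)) 1

noncomputable def ev {K : Type*} [TopologicalSpace K] {n : ℕ} (x : K) (v : EuclideanSpace ℝ (Fin n)) :
    MvPolynomial (Fin n) C(K, ℂ) →+* ℂ :=
  MvPolynomial.eval₂Hom (Pi.evalRingHom (fun _ : K => ℂ) x |>.comp ContinuousMap.coeFnRingHom)
    (fun j => ((v j : ℝ) : ℂ))

theorem ev_X {K : Type*} [TopologicalSpace K] {n : ℕ} (x : K) (v : EuclideanSpace ℝ (Fin n))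
    (j : Fin n) : ev x v (MvPolynomial.X j) = ((v j : ℝ) : ℂ) := by
  simp [ev]

theorem ev_C {K : Type*} [TopologicalSpace K] {n : ℕ} (x : K) (v : EuclideanSpace ℝ (Fin n))
    (f : C(K, ℂ)) : ev x v (MvPolynomial.C f) = f x := by
  simp [ev]

theorem ev_star {K : Type*} [TopologicalSpace K] {n : ℕ} (x : K) (v : EuclideanSpace ℝ (Fin n))
    (p : MvPolynomial (Fin n) C(K, ℂ)) :
    ev x v (MvPolynomial.map (starRingEnd C(K, ℂ)) p) = (starRingEnd ℂ) (ev x v p) := by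
  have : (ev x v).comp (MvPolynomial.map (starRingEnd C(K, ℂ)))
      = (starRingEnd ℂ).comp (ev x v) := by
    apply MvPolynomial.ringHom_ext
    · intro f
      rw [RingHom.comp_apply, RingHom.comp_apply, MvPolynomial.map_C, ev_C, ev_C]
      rfl
    · intro i
      rw [RingHom.comp_apply, RingHom.comp_apply, MvPolynomial.map_X, ev_X, Complex.conj_ofReal]
  exact RingHom.congr_fun this p

theorem ev_sum {K : Type*} [TopologicalSpace K] {n : ℕ} (x : K) (v : EuclideanSpace ℝ (Fin n))
    (p : MvPolynomial (Fin n) C(K, ℂ)) (d : ℕ) (hp : p.IsHomogeneous d) :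
    ev x v p = ∑ α ∈ Finset.piAntidiag Finset.univ d,
      (∏ j, ((v j : ℝ) : ℂ) ^ α j) * (p.coeff (Finsupp.equivFunOnFinite.symm α)) x := by
  have h1 : ev x v p = ∑ β ∈ p.support, (∏ j, ((v j : ℝ) : ℂ) ^ β j) * (p.coeff β) x := by
    simp only [ev, MvPolynomial.coe_eval₂Hom, MvPolynomial.eval₂_eq']
    refine Finset.sum_congr rfl fun β _ => ?_
    rw [mul_comm]; rfl
  rw [h1]
  refine Finset.sum_of_injOn (fun β : Fin n →₀ ℕ => (β : Fin n → ℕ))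
    (DFunLike.coe_injective.injOn) ?_ ?_ ?_
  · intro β hβ
    simp only [Finset.mem_coe] at hβ ⊢
    rw [Finset.mem_piAntidiag]
    refine ⟨?_, by simp⟩
    have := hp (MvPolynomial.mem_support_iff.1 hβ)
    rw [← this, Finsupp.weight_apply, Finsupp.sum_fintype _ _ (by simp)]
    simp
  · intro α _ hα
    have : Finsupp.equivFunOnFinite.symm α ∉ p.support := fun h =>
      hα ⟨Finsupp.equivFunOnFinite.symm α, h, rfl⟩
    rw [MvPolynomial.notMem_support_iff.1 this, ContinuousMap.zero_apply, mul_zero]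
  · intro β _
    have : Finsupp.equivFunOnFinite.symm (β : Fin n → ℕ) = β := by ext; rfl
    simp only [this]

/-- representable by a homogeneous polynomial of degree `2 * s` -/
def HRep {K : Type*} [TopologicalSpace K] {n : ℕ} (F : K × Sph n → ℂ) (s : ℕ) : Prop :=
  ∃ p : MvPolynomial (Fin n) C(K, ℂ), p.IsHomogeneous (2 * s) ∧
    ∀ x (ξ : Sph n), F (x, ξ) = ev x ξ.1 p

theorem HRep.up1 {K : Type*} [TopologicalSpace K] {n : ℕ} {F : K × Sph n → ℂ} {s : ℕ}
    (h : HRep F s) : HRep F (s + 1) := by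
  obtain ⟨p, hp, hF⟩ := h
  refine ⟨p * ∑ j, MvPolynomial.X j ^ 2, ?_, ?_⟩
  · have : (∑ j, MvPolynomial.X j ^ 2 : MvPolynomial (Fin n) C(K, ℂ)).IsHomogeneous 2 := by
      apply MvPolynomial.IsHomogeneous.sum
      intro i _
      simpa using (MvPolynomial.isHomogeneous_X C(K, ℂ) i).pow 2
    exact hp.mul this
  · intro x ξ
    rw [map_mul, ← hF, map_sum]
    simp only [map_pow, ev_X]
    have h1 : ‖ξ.1‖ = 1 := by simpa using ξ.2
    have h2 : ∑ j, (ξ.1 j) ^ 2 = (1 : ℝ) := by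
      rw [← EuclideanSpace.real_norm_sq_eq, h1]; norm_num
    have h3 : ∑ j, ((ξ.1 j : ℝ) : ℂ) ^ 2 = 1 := by exact_mod_cast h2
    rw [h3, mul_one]

theorem HRep.up {K : Type*} [TopologicalSpace K] {n : ℕ} {F : K × Sph n → ℂ} {s t : ℕ}
    (h : HRep F s) (hst : s ≤ t) : HRep F t := by
  induction t, hst using Nat.le_induction with
  | base => exact h
  | succ t _ ih => exact ih.up1

theorem HRep.add {K : Type*} [TopologicalSpace K] {n : ℕ} {F G : K × Sph n → ℂ} {s t : ℕ}
    (hF : HRep F s) (hG : HRep G t) : HRep (fun p => F p + G p) (s + t) := by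
  obtain ⟨p, hp, h1⟩ := hF.up (Nat.le_add_right s t)
  obtain ⟨q, hq, h2⟩ := hG.up (Nat.le_add_left t s)
  exact ⟨p + q, hp.add hq, fun x ξ => by simp only [h1, h2, map_add]⟩

theorem HRep.mul {K : Type*} [TopologicalSpace K] {n : ℕ} {F G : K × Sph n → ℂ} {s t : ℕ}
    (hF : HRep F s) (hG : HRep G t) : HRep (fun p => F p * G p) (s + t) := by
  obtain ⟨p, hp, h1⟩ := hF
  obtain ⟨q, hq, h2⟩ := hG
  refine ⟨p * q, ?_, fun x ξ => by simp only [h1, h2, map_mul]⟩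
  rw [mul_add]; exact hp.mul hq

theorem HRep.star {K : Type*} [TopologicalSpace K] {n : ℕ} {F : K × Sph n → ℂ} {s : ℕ}
    (hF : HRep F s) : HRep (fun p => (starRingEnd ℂ) (F p)) s := by
  obtain ⟨p, hp, h1⟩ := hF
  exact ⟨_, hp.map (starRingEnd C(K, ℂ)), fun x ξ => by simp only [h1, ev_star]⟩

theorem HRep.base {K : Type*} [TopologicalSpace K] {n : ℕ} (f : C(K, ℂ)) :
    HRep (fun p : K × Sph n => f p.1) 0 :=
  ⟨MvPolynomial.C f, MvPolynomial.isHomogeneous_C _ _, fun x ξ => by simp only [ev_C]⟩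

theorem HRep.coord {K : Type*} [TopologicalSpace K] {n : ℕ} (i j : Fin n) :
    HRep (fun p : K × Sph n => ((p.2.1 i * p.2.1 j : ℝ) : ℂ)) 1 :=
  ⟨MvPolynomial.X i * MvPolynomial.X j,
    (MvPolynomial.isHomogeneous_X _ i).mul (MvPolynomial.isHomogeneous_X _ j),
    fun x ξ => by simp only [map_mul, ev_X, Complex.ofReal_mul]⟩

def qm {K : Type*} {n : ℕ} (p : K × Sph n) : K × (Fin n → Fin n → ℝ) :=
  (p.1, fun i j => p.2.1 i * p.2.1 j)

theorem qm_cont {K : Type*} [TopologicalSpace K] {n : ℕ} : Continuous (qm (K := K) (n := n)) := by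
  unfold qm
  fun_prop

theorem qm_fiber {K : Type*} {n : ℕ} {p p' : K × Sph n} (h : qm p = qm p') :
    p.1 = p'.1 ∧ (p.2 = p'.2 ∨ p.2.1 = - p'.2.1) := by
  obtain ⟨x, ξ⟩ := p
  obtain ⟨y, η⟩ := p'
  simp only [qm, Prod.mk.injEq] at h ⊢
  refine ⟨h.1, ?_⟩
  have h2 : ∀ i j, ξ.1 i * ξ.1 j = η.1 i * η.1 j := fun i j => congrFun (congrFun h.2 i) j
  have hne : ξ.1 ≠ 0 := by
    intro h0
    have h1 : ‖ξ.1‖ = 1 := by simpa using ξ.2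
    rw [h0] at h1; simp at h1
  obtain ⟨j, hj⟩ : ∃ j, ξ.1 j ≠ 0 := by
    by_contra! hc
    exact hne (by ext j; simpa using hc j)
  rcases mul_self_eq_mul_self_iff.1 (h2 j j) with h3 | h3
  · left
    apply Subtype.ext
    ext i
    have := h2 i j
    rw [← h3] at this
    exact mul_right_cancel₀ hj this
  · right
    ext i
    have := h2 i j
    have h4 : η.1 j = - ξ.1 j := by rw [h3]; ring
    rw [h4] at this
    apply mul_right_cancel₀ hj
    rw [this]; simp

noncomputable def repAlg (K : Type*) [TopologicalSpace K] (n : ℕ) :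
    StarSubalgebra ℂ C(Set.range (qm (K := K) (n := n)), ℂ) where
  carrier := {F | ∃ s, HRep (fun p => F ⟨qm p, p, rfl⟩) s}
  mul_mem' := by
    rintro F G ⟨s, hs⟩ ⟨t, ht⟩
    exact ⟨_, hs.mul ht⟩
  add_mem' := by
    rintro F G ⟨s, hs⟩ ⟨t, ht⟩
    exact ⟨_, hs.add ht⟩
  algebraMap_mem' := by
    intro c
    exact ⟨0, HRep.base (ContinuousMap.const K c)⟩
  star_mem' := by
    rintro F ⟨s, hs⟩
    exact ⟨_, hs.star⟩

theorem repAlg_sep (K : Type*) [TopologicalSpace K] [CompactSpace K] [T2Space K] (n : ℕ) :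
    (repAlg K n).SeparatesPoints := by
  rintro ⟨_, p, rfl⟩ ⟨_, p', rfl⟩ hne
  by_cases hx : p.1 = p'.1
  · have : ∃ i j, p.2.1 i * p.2.1 j ≠ p'.2.1 i * p'.2.1 j := by
      by_contra! hc
      apply hne
      apply Subtype.ext
      exact Prod.ext hx (funext fun i => funext fun j => hc i j)
    obtain ⟨i, j, hij⟩ := this
    refine ⟨_, ⟨(⟨fun z => ((z.1.2 i j : ℝ) : ℂ), by fun_prop⟩ : C(_, ℂ)), ⟨1, ?_⟩, rfl⟩, ?_⟩
    · exact HRep.coord i j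
    · simpa [qm] using fun h => hij (by exact_mod_cast h)
  · obtain ⟨f, hf0, hf1, -⟩ := exists_continuous_zero_one_of_isClosed
      (isClosed_singleton (x := p.1)) (isClosed_singleton (x := p'.1)) (by simpa using hx)
    let g : C(K, ℂ) := ⟨fun x => (f x : ℂ), by fun_prop⟩
    refine ⟨_, ⟨(⟨fun z => g z.1.1, by fun_prop⟩ : C(_, ℂ)), ⟨0, ?_⟩, rfl⟩, ?_⟩
    · exact HRep.base g
    · have h0 := hf0 (Set.mem_singleton _)
      have h1 := hf1 (Set.mem_singleton _)
      simp [qm, g, h0, h1]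

theorem scalar_approx {K : Type*} [TopologicalSpace K] [CompactSpace K] [T2Space K] {n : ℕ}
    (f : K × Sph n → ℂ) (hf : Continuous f)
    (heven : ∀ (x : K) (ξ η : Sph n), ξ.1 = - η.1 → f (x, ξ) = f (x, η))
    (δ : ℝ) (hδ : 0 < δ) :
    ∃ s F, HRep F s ∧ ∀ p, ‖F p - f p‖ < δ := by
  let q : C(K × Sph n, Set.range (qm (K := K) (n := n))) :=
    ⟨Set.rangeFactorization qm, qm_cont.subtype_mk _⟩
  have hq : Topology.IsQuotientMap q :=
    q.continuous.isClosedMap.isQuotientMap q.continuous Set.rangeFactorization_surjective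
  have : CompactSpace (Set.range (qm (K := K) (n := n))) :=
    isCompact_iff_compactSpace.1 (isCompact_range qm_cont)
  have hfac : Function.FactorsThrough (⟨f, hf⟩ : C(K × Sph n, ℂ)) q := by
    rintro ⟨x, ξ⟩ ⟨y, η⟩ h
    obtain ⟨h1, h2⟩ := qm_fiber (congrArg Subtype.val h)
    simp only at h1 h2
    subst h1
    rcases h2 with h2 | h2
    · rw [h2]
    · exact heven x ξ η h2
  let G := hq.lift _ hfac
  have hG : ∀ p, G (q p) = f p := fun p =>
    DFunLike.congr_fun (hq.lift_comp _ hfac) p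
  have hd := ContinuousMap.starSubalgebra_topologicalClosure_eq_top_of_separatesPoints
    (repAlg K n) (repAlg_sep K n)
  have hmem : G ∈ (repAlg K n).topologicalClosure := by rw [hd]; trivial
  have hmem' : G ∈ closure (repAlg K n : Set C(Set.range (qm (K := K) (n := n)), ℂ)) := hmem
  obtain ⟨F, ⟨s, hs⟩, hF⟩ := Metric.mem_closure_iff.1 hmem' δ hδ
  refine ⟨s, _, hs, fun p => ?_⟩
  rw [← hG, ← dist_eq_norm, dist_comm]
  exact lt_of_le_of_lt (ContinuousMap.dist_apply_le_dist (q p)) hF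

theorem ev_smul {K : Type*} [TopologicalSpace K] {n : ℕ} (x : K) (v : EuclideanSpace ℝ (Fin n))
    (c : ℝ) (p : MvPolynomial (Fin n) C(K, ℂ)) (d : ℕ) (hp : p.IsHomogeneous d) :
    ev x (c • v) p = (c : ℂ) ^ d * ev x v p := by
  rw [ev_sum x _ p d hp, ev_sum x _ p d hp, Finset.mul_sum]
  refine Finset.sum_congr rfl fun α hα => ?_
  have h := (Finset.mem_piAntidiag.1 hα).1
  rw [← h, ← Finset.prod_pow_eq_pow_sum, ← mul_assoc, ← Finset.prod_mul_distrib]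
  simp [mul_pow]

/-- Lemma 5.1 (cf. Remark 5.2): every continuous family, parametrized by a nonempty compact
Hausdorff space `K`, of even invertible matrix functions on the unit sphere `S^{n-1}` can be
uniformly approximated by (restrictions to the sphere of) even-degree homogeneous matrix
polynomials in `ξ` which are invertible for all `ξ ≠ 0`. -/
theorem statement0 {K : Type*} [TopologicalSpace K] [CompactSpace K] [T2Space K] [Nonempty K]
    {n r : ℕ} (hn : 1 ≤ n) (hr : 1 ≤ r)
    (φ : K × Metric.sphere (0 : EuclideanSpace ℝ (Fin n)) 1 → Matrix (Fin r) (Fin r) ℂ)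
    (hφc : Continuous φ)
    (hφeven : ∀ (x : K) (ξ η : Metric.sphere (0 : EuclideanSpace ℝ (Fin n)) 1),
      (ξ : EuclideanSpace ℝ (Fin n)) = -(η : EuclideanSpace ℝ (Fin n)) → φ (x, ξ) = φ (x, η))
    (hφinv : ∀ p, IsUnit (φ p))
    (ε : ℝ) (hε : 0 < ε) :
    ∃ (s : ℕ), 1 ≤ s ∧
      ∃ (A : Finset (Fin n → ℕ)) (a : (Fin n → ℕ) → K → Matrix (Fin r) (Fin r) ℂ),
        (∀ α ∈ A, (∑ j, α j) = 2 * s) ∧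
        (∀ α ∈ A, Continuous (a α)) ∧
        (∀ (x : K) (ξ : Metric.sphere (0 : EuclideanSpace ℝ (Fin n)) 1),
          ‖(∑ α ∈ A, (∏ j, ((ξ : EuclideanSpace ℝ (Fin n)) j : ℂ) ^ α j) • a α x)
            - φ (x, ξ)‖ < ε) ∧
        (∀ (x : K) (ξ : EuclideanSpace ℝ (Fin n)), ξ ≠ 0 →
          IsUnit (∑ α ∈ A, (∏ j, ((ξ j : ℂ)) ^ α j) • a α x)) := by
  classical
  obtain ⟨δ, hδ, hδu⟩ : ∃ δ > 0, ∀ p M, ‖M - φ p‖ < δ → IsUnit M := by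
    have hc : IsCompact (Set.range φ) := isCompact_range hφc
    have ho : IsOpen {M : Matrix (Fin r) (Fin r) ℂ | IsUnit M} := by
      have : {M : Matrix (Fin r) (Fin r) ℂ | IsUnit M} = {M | M.det ≠ 0} := by
        ext M; simp [Matrix.isUnit_iff_isUnit_det]
      rw [this]
      exact isOpen_ne.preimage (continuous_id.matrix_det)
    obtain ⟨δ, hδ, hsub⟩ := hc.exists_thickening_subset_open ho
      (by rintro _ ⟨p, rfl⟩; exact hφinv p)
    refine ⟨δ, hδ, fun p M hM => hsub ?_⟩
    rw [Metric.mem_thickening_iff]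
    exact ⟨φ p, ⟨p, rfl⟩, by rwa [dist_eq_norm]⟩
  have hr0 : (0 : ℝ) < r := by exact_mod_cast hr
  set κ := min ε δ / (2 * r) with hκ
  have hm : 0 < min ε δ := lt_min hε hδ
  have hκ0 : 0 < κ := by positivity
  have hex : ∀ i k : Fin r, ∃ s F, HRep F s ∧ ∀ p, ‖F p - φ p i k‖ < κ := fun i k =>
    scalar_approx (fun p => φ p i k) (hφc.matrix_elem i k)
      (fun x ξ η h => by simp only [hφeven x ξ η h]) κ hκ0
  choose s0 F hF hFκ using hex
  set S := 1 + ∑ i, ∑ k, s0 i k with hS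
  have hle : ∀ i k, s0 i k ≤ S := by
    intro i k
    have h1 := Finset.single_le_sum (f := fun k => s0 i k) (fun _ _ => Nat.zero_le _)
      (Finset.mem_univ k)
    have h2 := Finset.single_le_sum (f := fun i => ∑ k, s0 i k) (fun _ _ => Nat.zero_le _)
      (Finset.mem_univ i)
    omega
  have hF' : ∀ i k, HRep (F i k) S := fun i k => (hF i k).up (hle i k)
  choose P hP hPF using hF'
  let A : Finset (Fin n → ℕ) := Finset.piAntidiag Finset.univ (2 * S)
  let a : (Fin n → ℕ) → K → Matrix (Fin r) (Fin r) ℂ := fun α x =>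
    Matrix.of fun i k => ((P i k).coeff (Finsupp.equivFunOnFinite.symm α)) x
  have hsum : ∀ (x : K) (v : EuclideanSpace ℝ (Fin n)),
      (∑ α ∈ A, (∏ j, ((v j : ℝ) : ℂ) ^ α j) • a α x) = Matrix.of fun i k => ev x v (P i k) := by
    intro x v
    ext i k
    rw [Matrix.sum_apply, Matrix.of_apply, ev_sum x v _ _ (hP i k)]
    rfl
  have happ : ∀ (x : K) (ξ : Metric.sphere (0 : EuclideanSpace ℝ (Fin n)) 1),
      ‖(Matrix.of fun i k => ev x ξ.1 (P i k)) - φ (x, ξ)‖ < min ε δ := by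
    intro x ξ
    have hb : ‖(Matrix.of fun i k => ev x ξ.1 (P i k)) - φ (x, ξ)‖ ≤ r * κ := by
      have h0 : 0 ≤ (r : ℝ) * κ := by positivity
      rw [Matrix.linfty_opNorm_def, ← Real.le_toNNReal_iff_coe_le h0]
      apply Finset.sup_le
      intro i _
      rw [Real.le_toNNReal_iff_coe_le h0]
      push_cast
      calc _ ≤ ∑ _k : Fin r, κ := by
            apply Finset.sum_le_sum
            intro k _
            have := (hFκ i k (x, ξ)).le
            rw [hPF] at this
            exact this
        _ = _ := by simp
    refine lt_of_le_of_lt hb ?_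
    rw [hκ]
    field_simp
    linarith
  refine ⟨S, by omega, A, a, ?_, ?_, ?_, ?_⟩
  · intro α hα
    exact (Finset.mem_piAntidiag.1 hα).1
  · intro α _
    exact continuous_matrix fun i k => ContinuousMap.continuous _
  · intro x ξ
    rw [hsum]
    exact (happ x ξ).trans_le (min_le_left _ _)
  · intro x v hv
    rw [hsum]
    have hv0 : ‖v‖ ≠ 0 := norm_ne_zero_iff.2 hv
    let ξ : Metric.sphere (0 : EuclideanSpace ℝ (Fin n)) 1 :=
      ⟨‖v‖⁻¹ • v, by simp [norm_smul, hv0]⟩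
    have hvξ : v = ‖v‖ • ξ.1 := by simp [ξ, smul_smul, hv0]
    have hu := hδu (x, ξ) _ ((happ x ξ).trans_le (min_le_right _ _))
    have heq : (Matrix.of fun i k => ev x v (P i k)) =
        ((‖v‖ : ℂ) ^ (2 * S)) • (Matrix.of fun i k => ev x ξ.1 (P i k)) := by
      ext i k
      simp only [Matrix.of_apply, Matrix.smul_apply, smul_eq_mul]
      rw [← ev_smul x ξ.1 ‖v‖ _ _ (hP i k), ← hvξ]
    rw [heq]
    rw [Matrix.isUnit_iff_isUnit_det] at hu ⊢
    rw [Matrix.det_smul]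
    have : (‖v‖ : ℂ) ≠ 0 := by exact_mod_cast hv0
    exact (IsUnit.mk0 _ (pow_ne_zero _ (pow_ne_zero _ this))).mul hu
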